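/- Let g_1, …, g_T ∈ ℝ^d, let 0 < β_{1,t} ≤ β_1 < 1 for all t, β_2 ∈ (0,1), ε ≥ 0, and let m_t, v_t be the AdaMomentum recursions m_0 = 0, v_0 = 0, m_t = β_{1,t} m_{t−1} + (1−β_{1,t}) g_t, v_t = β_2 v_{t−1} + (1−β_2) m_t² + ε (elementwise). With γ := β_1/√β_2, for every coordinate i with v_{T,i} > 0 one has m_{T,i}² / √(T · v_{T,i}) ≤ (1 / ((1−β_1)² √(T(1−β_2)))) · Σ_{j=1}^T γ^{T−j} |g_{j,i}|. -/

import Mathlib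

/-!
The single summand `(1 - β₂) m_T²` of `v_T` already gives `m_T² / √(T v_T) ≤ |m_T| / √(T (1 - β₂))`,
and unrolling the momentum recursion with `1 - β_{1,t} ≤ 1` gives `|m_T| ≤ ∑ⱼ β₁^(T-j) |gⱼ|`.
The factor `1 / (1 - β₁)²` and the passage from `β₁` to `γ = β₁ / √β₂` only lose from there.
-/

theorem le_sum_pow_mul_of_succ_le_mul_add {R : Type*} [CommSemiring R] [PartialOrder R]
    [IsOrderedRing R] {u b : ℕ → R} {c : R} (hc : 0 ≤ c) (hu0 : u 0 = 0)
    (hu : ∀ n, u (n + 1) ≤ c * u n + b (n + 1)) (n : ℕ) :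
    u n ≤ ∑ j ∈ Finset.Icc 1 n, c ^ (n - j) * b j := by
  calc u n
      ≤ u 0 * ∏ _i ∈ Finset.Ico 0 n, c +
          ∑ k ∈ Finset.Ico 0 n, b (k + 1) * ∏ _i ∈ Finset.Ico (k + 1) n, c :=
        discrete_gronwall_prod_general (fun k _ => hu k) (fun _ _ => hc) n.zero_le
    _ = ∑ k ∈ Finset.Ico 0 n, c ^ (n - (k + 1)) * b (k + 1) := by
        simp only [hu0, zero_mul, zero_add, Finset.prod_const, Nat.card_Ico, mul_comm]
    _ = ∑ j ∈ Finset.Icc 1 n, c ^ (n - j) * b j :=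
        Finset.sum_Ico_add' (fun j => c ^ (n - j) * b j) 0 n 1

theorem sq_div_sqrt_le_div_sqrt {a c v : ℝ} (ha : 0 ≤ a) (hc : 0 < c) (hv : 0 < v)
    (h : c * a ^ 2 ≤ v) : a ^ 2 / √v ≤ a / √c := by
  have sqrt_mul_le : √c * a ≤ √v :=
    Real.le_sqrt_of_sq_le (by rwa [mul_pow, Real.sq_sqrt hc.le])
  rw [div_le_div_iff₀ (Real.sqrt_pos.mpr hv) (Real.sqrt_pos.mpr hc)]
  calc a ^ 2 * √c = a * (√c * a) := by ring
    _ ≤ a * √v := by gcongr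

theorem one_div_mul_sum_pow_mul_le {ι : Type*} {s : Finset ι} {e : ι → ℕ} {b : ι → ℝ}
    {c γ q r : ℝ} (hb : ∀ j ∈ s, 0 ≤ b j) (hc : 0 ≤ c) (hcγ : c ≤ γ) (hq0 : 0 < q)
    (hq1 : q ≤ 1) (hr : 0 < r) :
    1 / r * ∑ j ∈ s, c ^ e j * b j ≤ 1 / (q * r) * ∑ j ∈ s, γ ^ e j * b j := by
  have sum_nonneg : 0 ≤ ∑ j ∈ s, c ^ e j * b j :=
    Finset.sum_nonneg fun j hj => mul_nonneg (pow_nonneg hc _) (hb j hj)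
  gcongr with j hj
  · exact mul_le_of_le_one_left hr.le hq1
  · exact hb j hj

section Momentum

variable {E : Type*} [SeminormedAddCommGroup E] [NormedSpace ℝ E]
  {g m : ℕ → E} {v β1t : ℕ → ℝ} {β1 β2 ε : ℝ}

theorem norm_momentum_le_sum_pow_mul_norm
    (hβ1t : ∀ t, 1 ≤ t → β1t t ∈ Set.Icc 0 1 ∧ β1t t ≤ β1) (hm0 : m 0 = 0)
    (hm : ∀ t, m (t + 1) = β1t (t + 1) • m t + (1 - β1t (t + 1)) • g (t + 1)) (t : ℕ) :
    ‖m t‖ ≤ ∑ j ∈ Finset.Icc 1 t, β1 ^ (t - j) * ‖g j‖ := by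
  have β1_nonneg : 0 ≤ β1 := (hβ1t 1 le_rfl).1.1.trans (hβ1t 1 le_rfl).2
  refine le_sum_pow_mul_of_succ_le_mul_add (u := (‖m ·‖)) (b := (‖g ·‖)) β1_nonneg (by simp [hm0])
    (fun k => ?_) t
  obtain ⟨⟨weight_nonneg, weight_le_one⟩, weight_le⟩ := hβ1t (k + 1) k.succ_pos
  calc ‖m (k + 1)‖
      ≤ ‖β1t (k + 1) • m k‖ + ‖(1 - β1t (k + 1)) • g (k + 1)‖ := hm k ▸ norm_add_le _ _
    _ = β1t (k + 1) * ‖m k‖ + (1 - β1t (k + 1)) * ‖g (k + 1)‖ := by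
        rw [norm_smul_of_nonneg weight_nonneg, norm_smul_of_nonneg (sub_nonneg.mpr weight_le_one)]
    _ ≤ β1 * ‖m k‖ + ‖g (k + 1)‖ := by
        gcongr
        exact mul_le_of_le_one_left (norm_nonneg _) (sub_le_self 1 weight_nonneg)

theorem mul_le_secondMoment {a : ℕ → ℝ} (ha : ∀ t, 0 ≤ a t) (hβ2 : β2 ∈ Set.Icc 0 1)
    (hε : 0 ≤ ε) (hv0 : 0 ≤ v 0)
    (hv : ∀ t, v (t + 1) = β2 * v t + (1 - β2) * a (t + 1) + ε) {t : ℕ} (ht : 1 ≤ t) :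
    (1 - β2) * a t ≤ v t := by
  have v_nonneg (k : ℕ) : 0 ≤ v k := by
    induction k with
    | zero => exact hv0
    | succ k ih =>
      rw [hv]
      exact add_nonneg
        (add_nonneg (mul_nonneg hβ2.1 ih) (mul_nonneg (sub_nonneg.mpr hβ2.2) (ha _))) hε
  obtain ⟨k, rfl⟩ := Nat.exists_eq_add_of_le' ht
  rw [hv]
  linarith [mul_nonneg hβ2.1 (v_nonneg k)]

theorem adamomentum_single_term_bound_general {T : ℕ} (hT : 1 ≤ T)
    (hβ1t : ∀ t, 1 ≤ t → β1t t ∈ Set.Icc 0 1 ∧ β1t t ≤ β1) (hβ2 : β2 ∈ Set.Ico 0 1)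
    (hε : 0 ≤ ε) (hm0 : m 0 = 0) (hv0 : 0 ≤ v 0)
    (hm : ∀ t, m (t + 1) = β1t (t + 1) • m t + (1 - β1t (t + 1)) • g (t + 1))
    (hv : ∀ t, v (t + 1) = β2 * v t + (1 - β2) * ‖m (t + 1)‖ ^ 2 + ε) (hvT : 0 < v T) :
    ‖m T‖ ^ 2 / √(T * v T)
      ≤ 1 / √(T * (1 - β2)) * ∑ j ∈ Finset.Icc 1 T, β1 ^ (T - j) * ‖g j‖ := by
  have T_pos : (0 : ℝ) < T := by exact_mod_cast hT
  have le_v : (1 - β2) * ‖m T‖ ^ 2 ≤ v T :=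
    mul_le_secondMoment (a := (‖m ·‖ ^ 2)) (fun _ => sq_nonneg _) ⟨hβ2.1, hβ2.2.le⟩ hε hv0 hv hT
  calc ‖m T‖ ^ 2 / √(T * v T)
      ≤ ‖m T‖ / √(T * (1 - β2)) := by
        refine sq_div_sqrt_le_div_sqrt (norm_nonneg _) (mul_pos T_pos (sub_pos.mpr hβ2.2))
          (mul_pos T_pos hvT) ?_
        rw [mul_assoc]
        gcongr
    _ = 1 / √(T * (1 - β2)) * ‖m T‖ := by ring
    _ ≤ 1 / √(T * (1 - β2)) * ∑ j ∈ Finset.Icc 1 T, β1 ^ (T - j) * ‖g j‖ := by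
        gcongr
        exact norm_momentum_le_sum_pow_mul_norm hβ1t hm0 hm T

end Momentum

/-- For the AdaMomentum recursions with `0 < β_{1,t} ≤ β₁ < 1`,
`β₂ ∈ (0,1)`, `ε ≥ 0` and `γ := β₁/√β₂`, for every coordinate `i` with
`v_{T,i} > 0`,
`m_{T,i}²/√(T v_{T,i}) ≤ (1/((1−β₁)²√(T(1−β₂)))) Σ_{j=1}^T γ^{T−j} |g_{j,i}|`. -/
theorem adamomentum_single_term_bound
    (d T : ℕ) (hT : 1 ≤ T) (g : ℕ → Fin d → ℝ) (β1 β2 ε : ℝ)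
    (β1t : ℕ → ℝ) (hβ1t : ∀ t, 1 ≤ t → 0 < β1t t ∧ β1t t ≤ β1) (hβ1 : β1 < 1)
    (hβ2 : 0 < β2 ∧ β2 < 1) (hε : 0 ≤ ε)
    (m v : ℕ → Fin d → ℝ) (hm0 : m 0 = 0) (hv0 : v 0 = 0)
    (hm : ∀ t i, m (t + 1) i = β1t (t + 1) * m t i + (1 - β1t (t + 1)) * g (t + 1) i)
    (hv : ∀ t i, v (t + 1) i = β2 * v t i + (1 - β2) * (m (t + 1) i) ^ 2 + ε)
    (i : Fin d) (hvT : 0 < v T i) :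
    (m T i) ^ 2 / Real.sqrt (T * v T i)
      ≤ 1 / ((1 - β1) ^ 2 * Real.sqrt (T * (1 - β2)))
        * ∑ j ∈ Finset.Icc 1 T, (β1 / Real.sqrt β2) ^ (T - j) * |g j i| := by
  have β1_nonneg : 0 ≤ β1 := (hβ1t 1 le_rfl).1.le.trans (hβ1t 1 le_rfl).2
  have β1_le_γ : β1 ≤ β1 / √β2 :=
    le_div_self β1_nonneg (Real.sqrt_pos.mpr hβ2.1) (Real.sqrt_le_one.mpr hβ2.2.le)
  have scale_pos : 0 < √(T * (1 - β2)) :=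
    Real.sqrt_pos.mpr (mul_pos (by exact_mod_cast hT) (sub_pos.mpr hβ2.2))
  have sharp_bound : m T i ^ 2 / √(T * v T i)
      ≤ 1 / √(T * (1 - β2)) * ∑ j ∈ Finset.Icc 1 T, β1 ^ (T - j) * |g j i| := by
    simpa only [Real.norm_eq_abs, sq_abs] using
      adamomentum_single_term_bound_general (g := (g · i)) (m := (m · i)) (v := (v · i)) hT
        (fun t ht => ⟨⟨(hβ1t t ht).1.le, (hβ1t t ht).2.trans hβ1.le⟩, (hβ1t t ht).2⟩)
        ⟨hβ2.1.le, hβ2.2⟩ hε (congrFun hm0 i) (congrFun hv0 i).ge (fun t => hm t i)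
        (fun t => by rw [Real.norm_eq_abs, sq_abs, hv]) hvT
  exact sharp_bound.trans <| one_div_mul_sum_pow_mul_le (fun _ _ => abs_nonneg _) β1_nonneg
    β1_le_γ (pow_pos (sub_pos.mpr hβ1) 2)
    (pow_le_one₀ (sub_nonneg.mpr hβ1.le) (sub_le_self 1 β1_nonneg)) scale_pos
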